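/- Let 0 < p < 1/2. There exists a constant c_p such that for every martingale F ∈ H_p(G) and every n ≥ 1, ‖σ_n F‖_{H_p} ≤ c_p 2^{d(n)(1/p − 2)} ‖F‖_{H_p}, where d(n) = |n| − [n] with |n| and [n] the highest and lowest nonzero binary digit positions of n. -/

import Mathlib

open MeasureTheory Filter Topology ENNReal NNReal

noncomputable section

/-- The dyadic group `G = (ℤ/2)^ℕ`. -/
abbrev G : Type := ℕ → ZMod 2

instance : TopologicalSpace (ZMod 2) := ⊥
instance : DiscreteTopology (ZMod 2) := ⟨rfl⟩
instance : MeasurableSpace G := borel G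
instance : BorelSpace G := ⟨rfl⟩

/-- Normalized Haar measure on `G`. -/
def μG : Measure G := Measure.addHaarMeasure ⟨⟨Set.univ, isCompact_univ⟩, by simp⟩

/-- Cylinder `I_n(x) = {y : y_0 = x_0, ..., y_{n-1} = x_{n-1}}`. -/
def cyl (n : ℕ) (x : G) : Set G := {y | ∀ k < n, y k = x k}

/-- `I_n = I_n(0)`. -/
def I₀ (n : ℕ) : Set G := cyl n 0

/-- `e t`: the element of `G` with a single 1 in coordinate `t`. -/
def e (t : ℕ) : G := fun k => if k = t then 1 else 0

/-- Rademacher functions `r_k(x) = (-1)^{x_k}`. -/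
def rade (k : ℕ) (x : G) : ℝ := (-1 : ℝ) ^ (x k).val

/-- Walsh functions `w_n = ∏ r_k^{n_k}` (binary digits `n_k` of `n`). -/
def walsh (n : ℕ) (x : G) : ℝ :=
  ∏ k ∈ Finset.range (n + 1), if n.testBit k then rade k x else 1

/-- Walsh–Dirichlet kernel `D_n = ∑_{k<n} w_k`. -/
def D (n : ℕ) (x : G) : ℝ := ∑ k ∈ Finset.range n, walsh k x

/-- Walsh–Fejér kernel `K_n = (1/n) ∑_{k=1}^n D_k`. -/
def K (n : ℕ) (x : G) : ℝ := (1 / n) * ∑ k ∈ Finset.Icc 1 n, D k x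

/-- Binary variation `V(n) = n_0 + ∑_{k≥1} |n_k - n_{k-1}|`. -/
def V (n : ℕ) : ℕ :=
  (if n.testBit 0 then 1 else 0) +
    ∑ k ∈ Finset.Icc 1 (n + 1), if n.testBit k ≠ n.testBit (k - 1) then 1 else 0

/-- `|n|`: index of the highest nonzero binary digit of `n`. -/
def hi (n : ℕ) : ℕ := Nat.log 2 n

/-- `[n]`: index of the lowest nonzero binary digit of `n`. -/
def lo (n : ℕ) : ℕ := padicValNat 2 n

/-- `d(n) = |n| - [n]`. -/
def dd (n : ℕ) : ℕ := hi n - lo n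

/-- A dyadic martingale: `F n` depends only on the first `n` coordinates, and
`F n` is the average of the two possible extensions, i.e. the martingale property
with respect to the dyadic filtration. -/
def IsDyadicMartingale (F : ℕ → G → ℝ) : Prop :=
  (∀ n x y, (∀ k < n, x k = y k) → F n x = F n y) ∧
  (∀ n x, F n x = (F (n+1) x + F (n+1) (Function.update x n (x n + 1))) / 2)

/-- `k`-th Walsh–Fourier coefficient of a martingale,
`F̂(k) = lim_n ∫ F_n w_k dμ` (the integrals are eventually constant). -/
def mcoeff (F : ℕ → G → ℝ) (k : ℕ) : ℝ := ∫ x, F (k+1) x * walsh k x ∂μG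

/-- Partial sums `S_m F` of the Walsh–Fourier series of a martingale. -/
def S (F : ℕ → G → ℝ) (m : ℕ) (x : G) : ℝ := ∑ j ∈ Finset.range m, mcoeff F j * walsh j x

/-- Fejér means `σ_n F = (1/n) ∑_{k=1}^n S_k F`. -/
def σ (F : ℕ → G → ℝ) (n : ℕ) (x : G) : ℝ := (1 / n) * ∑ k ∈ Finset.Icc 1 n, S F k x

/-- `H_p` quasi-norm of a martingale: `‖sup_n |F_n|‖_{L_p}`. -/
def HpNorm (p : ℝ) (F : ℕ → G → ℝ) : ℝ≥0∞ :=
  (∫⁻ x, (⨆ n, (‖F n x‖₊ : ℝ≥0∞)) ^ p ∂μG) ^ (1 / p)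

/-- Membership in the martingale Hardy space `H_p(G)`. -/
def MemHp (p : ℝ) (F : ℕ → G → ℝ) : Prop := IsDyadicMartingale F ∧ HpNorm p F < ⊤

/-- `L_p` quasi-norm of a function on `G`. -/
def LpN (p : ℝ) (f : G → ℝ) : ℝ≥0∞ := (∫⁻ x, (‖f x‖₊ : ℝ≥0∞) ^ p ∂μG) ^ (1 / p)

/-- Weak `L_p` quasi-norm: `‖f‖_{L_{p,∞}} = sup_{λ>0} λ μ(|f|>λ)^{1/p}`. -/
def wLp (p : ℝ) (f : G → ℝ) : ℝ≥0∞ :=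
  ⨆ t : ℝ≥0, (t : ℝ≥0∞) * (μG {x | (t : ℝ) < |f x|}) ^ (1 / p)

/-- Walsh–Fourier coefficient of an integrable function. -/
def fcoeff (f : G → ℝ) (j : ℕ) : ℝ := ∫ x, f x * walsh j x ∂μG

/-- Partial sums of the Walsh–Fourier series of a function. -/
def Sf (f : G → ℝ) (m : ℕ) (x : G) : ℝ := ∑ j ∈ Finset.range m, fcoeff f j * walsh j x

/-- Fejér means of the Walsh–Fourier series of a function. -/
def σf (f : G → ℝ) (n : ℕ) (x : G) : ℝ := (1 / n) * ∑ k ∈ Finset.Icc 1 n, Sf f k x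

/-- The martingale `(S_{2^m} g)_m` generated by a function `g`; used to interpret the
`H_p` norm of a function such as `σ_n F`. -/
def funMart (g : G → ℝ) : ℕ → G → ℝ := fun m => Sf g (2 ^ m)

/-- Modulus of continuity in `H_p`: `ω_{H_p}(1/2^n, F) = ‖F - S_{2^n} F‖_{H_p}`,
where `F - S_{2^n}F` is the martingale with `m`-th term `F_m - S_{min(2^n, 2^m)}F`. -/
def ωHp (p : ℝ) (n : ℕ) (F : ℕ → G → ℝ) : ℝ≥0∞ :=
  HpNorm p (fun m x => F m x - S F (min (2 ^ n) (2 ^ m)) x)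

/-- The a.e. limit of a martingale (as a limsup, which agrees a.e. with the limit
for martingales in `H_p`). -/
def mLim (F : ℕ → G → ℝ) (x : G) : ℝ := Filter.limsup (fun m => F m x) Filter.atTop

/-- The set `E_l := I_{l+1}(e_{l-1} + e_l)`, with the convention
`I_1(e_{-1}+e_0) = I_2(e_0+e_1)` for `l = 0`. -/
def Eset (l : ℕ) : Set G :=
  if l = 0 then cyl 2 (e 0 + e 1) else cyl (l + 1) (e (l - 1) + e l)

/-!
Let `f` be the part of a Walsh series with indices `j` such that `j / 2 ^ k = q`. Translation by
`e k` multiplies `f` by `(-1) ^ q`, so `f` is half the sum or difference of the enclosing block of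
length `2 ^ (k + 1)` and its translate by `e k`. Hence passing from a block to its half costs a
factor `2 ^ (1 - p)` in `∫ |·| ^ p`, which for `p ≤ 1` is subadditive. The Fejér weights
`2 ^ k - j % 2 ^ k` are `1 + ∑_{t < k} 2 ^ t (1 + (-1) ^ (j / 2 ^ t)) / 2`, which writes the Fejér
sum of a block as a combination of averages of translates of the block itself, at the cost of a
factor `2 ^ (p * k)`.

The indices below `n` split into one dyadic block for each nonzero binary digit `k` of `n`, on which
the weight `n - j` of `n σ_n` is a Fejér weight plus the constant `n % 2 ^ k ≤ 2 ^ k`. Comparing all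
these blocks with `F_{|n| + 1}` and dividing by `n ≥ 2 ^ |n|`, the digit `k` contributes
`2 ^ ((1 - 2 * p) * (|n| - k))`; for `p < 1 / 2` these sum to a multiple of
`2 ^ ((1 - 2 * p) * d(n))`. The dyadic partial sums of `σ_n F` of order `2 ^ m ≤ n` are a multiple
at most `1` of `F_m` plus the Fejér sum of the block `[0, 2 ^ m)` divided by `n`, which a geometric
series in `2 ^ (p * m)` bounds uniformly in `n`; those of order `2 ^ m ≥ n` are `σ_n F` itself.
-/

/-! ### Walsh functions as characters -/

theorem rade_add (k : ℕ) (x y : G) : rade k (x + y) = rade k x * rade k y := by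
  rw [rade, Pi.add_apply, ZMod.val_add, ← neg_one_pow_eq_pow_mod_two, pow_add, rade, rade]

theorem rade_of_ne_zero {k : ℕ} {x : G} (h : x k ≠ 0) : rade k x = -1 := by
  have h1 : x k = 1 := Fin.eq_one_of_ne_zero (x k) h
  rw [rade, h1, ZMod.val_one, pow_one]

theorem rade_e (k t : ℕ) : rade k (e t) = if k = t then -1 else 1 := by
  by_cases h : k = t <;> simp [rade, e, h, ZMod.val_one]

theorem rade_mul_self (k : ℕ) (x : G) : rade k x * rade k x = 1 := by
  rw [rade, ← mul_pow, neg_one_mul, neg_neg, one_pow]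

theorem continuous_rade (k : ℕ) : Continuous (rade k) :=
  (continuous_of_discreteTopology (f := fun a : ZMod 2 => (-1 : ℝ) ^ a.val)).comp
    (continuous_apply k)

theorem walsh_zero (x : G) : walsh 0 x = 1 := by simp [walsh]

theorem walsh_eq_prod {n M : ℕ} (h : n < 2 ^ M) (x : G) :
    walsh n x = ∏ k ∈ Finset.range M, if n.testBit k then rade k x else 1 := by
  have factor_eq_one {m k : ℕ} (hm : n < 2 ^ m) (hk : k ∉ Finset.range m) :
      (if n.testBit k then rade k x else 1) = 1 := by
    rw [Finset.mem_range, not_lt] at hk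
    exact if_neg (by simp [Nat.testBit_lt_two_pow (hm.trans_le (Nat.pow_le_pow_right two_pos hk))])
  have hn : n < 2 ^ (n + 1) := n.lt_succ_self.trans (n + 1).lt_two_pow_self
  rw [walsh, Finset.prod_subset (Finset.range_mono (le_max_left (n + 1) M))
    fun _ _ hk => factor_eq_one hn hk, ← Finset.prod_subset
    (Finset.range_mono (le_max_right (n + 1) M)) fun _ _ hk => factor_eq_one h hk]

theorem walsh_two_pow_add {m j : ℕ} (h : j < 2 ^ m) (x : G) :
    walsh (2 ^ m + j) x = rade m x * walsh j x := by
  have h' : 2 ^ m + j < 2 ^ (m + 1) := by rw [pow_succ]; omega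
  rw [walsh_eq_prod h', walsh_eq_prod h, Finset.prod_range_succ, mul_comm,
    Nat.testBit_two_pow_add_eq, Nat.testBit_lt_two_pow h, Bool.not_false, if_pos rfl]
  congr 1
  refine Finset.prod_congr rfl fun k hk => ?_
  rw [Nat.testBit_two_pow_add_gt (Finset.mem_range.1 hk)]

theorem walsh_add (n : ℕ) (x y : G) : walsh n (x + y) = walsh n x * walsh n y := by
  rw [walsh, walsh, walsh, ← Finset.prod_mul_distrib]
  refine Finset.prod_congr rfl fun k _ => ?_
  split_ifs
  exacts [rade_add k x y, (one_mul 1).symm]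

theorem walsh_mul_self (n : ℕ) (x : G) : walsh n x * walsh n x = 1 := by
  rw [walsh, ← Finset.prod_mul_distrib]
  refine Finset.prod_eq_one fun k _ => ?_
  split_ifs
  exacts [rade_mul_self k x, one_mul 1]

theorem walsh_e (n t : ℕ) : walsh n (e t) = (-1) ^ (n / 2 ^ t) := by
  have hn : n < 2 ^ (n + t + 1) :=
    n.lt_two_pow_self.trans (Nat.pow_lt_pow_right one_lt_two (by omega))
  have ht : t ∈ Finset.range (n + t + 1) := Finset.mem_range.2 (by omega)
  rw [walsh_eq_prod hn, Finset.prod_eq_single_of_mem t ht, rade_e, if_pos rfl,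
    neg_one_pow_eq_pow_mod_two, Nat.testBit_eq_decide_div_mod_eq]
  · obtain h | h := Nat.mod_two_eq_zero_or_one (n / 2 ^ t) <;> simp [h]
  · intro k _ hk
    rw [rade_e, if_neg hk, ite_self]

theorem walsh_add_e (n t : ℕ) (x : G) : walsh n (x + e t) = (-1) ^ (n / 2 ^ t) * walsh n x := by
  rw [walsh_add, walsh_e, mul_comm]

theorem continuous_walsh (n : ℕ) : Continuous (walsh n) := by
  refine continuous_finsetProd _ fun k _ => ?_
  split_ifs
  exacts [continuous_rade k, continuous_const]

theorem D_two_pow_succ (m : ℕ) (x : G) : D (2 ^ (m + 1)) x = (1 + rade m x) * D (2 ^ m) x := by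
  rw [D, pow_succ, mul_two, Finset.sum_range_add, add_mul, one_mul, D, Finset.mul_sum]
  congr 1
  exact Finset.sum_congr rfl fun j hj => walsh_two_pow_add (Finset.mem_range.1 hj) x

theorem D_two_pow_eq_zero {k m : ℕ} (hkm : k < m) {x : G} (hx : x k ≠ 0) : D (2 ^ m) x = 0 := by
  induction m, hkm using Nat.le_induction with
  | base => rw [D_two_pow_succ, rade_of_ne_zero hx, add_neg_cancel, zero_mul]
  | succ m _ ih => rw [D_two_pow_succ, ih, mul_zero]

/-! ### Walsh–Fourier coefficients -/

instance : IsProbabilityMeasure μG := ⟨Measure.addHaarMeasure_self⟩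

instance : μG.IsAddHaarMeasure := by unfold μG; infer_instance

theorem integrable_μG_of_continuous {f : G → ℝ} (hf : Continuous f) : Integrable f μG :=
  hf.integrable_of_hasCompactSupport (HasCompactSupport.of_compactSpace f)

theorem integral_walsh_mul_walsh (i j : ℕ) :
    ∫ x, walsh i x * walsh j x ∂μG = if i = j then 1 else 0 := by
  split_ifs with hij
  · subst hij
    simp only [walsh_mul_self, integral_const, probReal_univ, smul_eq_mul, mul_one]
  · obtain ⟨t, ht⟩ : ∃ t, i / 2 ^ t % 2 ≠ j / 2 ^ t % 2 := by
      by_contra! h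
      exact hij (Nat.eq_of_testBit_eq fun t => by simp only [Nat.testBit_eq_decide_div_mod_eq, h t])
    have sign : (-1 : ℝ) ^ (i / 2 ^ t) * (-1) ^ (j / 2 ^ t) = -1 := by
      rw [← pow_add]
      exact Odd.neg_one_pow (Nat.odd_iff.2 (by omega))
    refine integral_eq_zero_of_add_right_eq_neg (g := e t) fun x => ?_
    rw [walsh_add_e, walsh_add_e, mul_mul_mul_comm, sign, neg_one_mul]

theorem fcoeff_sum_walsh (s : Finset ℕ) (c : ℕ → ℝ) (j : ℕ) :
    fcoeff (fun x => ∑ i ∈ s, c i * walsh i x) j = if j ∈ s then c j else 0 := by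
  simp only [fcoeff, Finset.sum_mul, mul_assoc]
  rw [integral_finsetSum]
  · simp only [integral_const_mul, integral_walsh_mul_walsh, mul_ite, mul_one, mul_zero,
      Finset.sum_ite_eq']
  · exact fun i _ => integrable_μG_of_continuous
      (continuous_const.mul ((continuous_walsh i).mul (continuous_walsh j)))

theorem integral_D_add {n : ℕ} (hn : n ≠ 0) (x : G) : ∫ y, D n (x + y) ∂μG = 1 := by
  have h := fcoeff_sum_walsh (Finset.range n) (fun j => walsh j x) 0
  rw [if_pos (Finset.mem_range.2 (Nat.pos_of_ne_zero hn)), walsh_zero] at h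
  simpa only [fcoeff, walsh_zero, mul_one, D, walsh_add] using h

theorem Sf_eq_integral_mul_D {f : G → ℝ} (hf : Continuous f) (n : ℕ) (x : G) :
    Sf f n x = ∫ y, f y * D n (x + y) ∂μG := by
  simp only [Sf, fcoeff, D, Finset.mul_sum, walsh_add, ← integral_mul_const]
  rw [integral_finsetSum]
  · exact Finset.sum_congr rfl fun j _ => integral_congr_ae (.of_forall fun y => by ring)
  · exact fun j _ => integrable_μG_of_continuous
      (hf.mul (continuous_const.mul (continuous_walsh j)))

theorem continuous_of_dependsOn_finite {s : Set ℕ} (hs : s.Finite) {f : G → ℝ}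
    (hf : DependsOn f s) : Continuous f := by
  have : Finite s := hs
  obtain ⟨g, rfl⟩ := dependsOn_iff_exists_comp.1 hf
  exact continuous_of_discreteTopology.comp (Pi.continuous_domRestrict s)

-- The kernel `D (2 ^ m)` is supported on the points whose first `m` coordinates vanish.
theorem Sf_two_pow_of_dependsOn {m : ℕ} {f : G → ℝ} (hf : DependsOn f (Set.Iio m)) (x : G) :
    Sf f (2 ^ m) x = f x := by
  have reproducing (y : G) : f y * D (2 ^ m) (x + y) = f x * D (2 ^ m) (x + y) := by
    by_cases hxy : ∀ k < m, x k = y k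
    · rw [hf hxy]
    · push Not at hxy
      obtain ⟨k, hk, hne⟩ := hxy
      rw [D_two_pow_eq_zero hk fun h => hne (CharTwo.add_eq_zero.1 h), mul_zero, mul_zero]
  rw [Sf_eq_integral_mul_D (continuous_of_dependsOn_finite (Set.finite_Iio m) hf)]
  simp only [reproducing, integral_const_mul, integral_D_add (pow_ne_zero m two_ne_zero), mul_one]

theorem add_e_eq_update (t : ℕ) (x : G) : x + e t = Function.update x t (x t + 1) := by
  ext k
  rcases eq_or_ne k t with rfl | hk
  · simp [e]
  · simp [e, hk]

section DyadicMartingale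

variable {F : ℕ → G → ℝ}

theorem IsDyadicMartingale.dependsOn (hF : IsDyadicMartingale F) (m : ℕ) :
    DependsOn (F m) (Set.Iio m) :=
  fun x y hxy => hF.1 m x y hxy

theorem IsDyadicMartingale.continuous (hF : IsDyadicMartingale F) (m : ℕ) : Continuous (F m) :=
  continuous_of_dependsOn_finite (Set.finite_Iio m) (hF.dependsOn m)

theorem IsDyadicMartingale.fcoeff_succ (hF : IsDyadicMartingale F) {j m : ℕ}
    (hj : j < 2 ^ m) : fcoeff (F (m + 1)) j = fcoeff (F m) j := by
  have hint : Integrable (fun x => F (m + 1) x * walsh j x) μG :=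
    integrable_μG_of_continuous ((hF.continuous (m + 1)).mul (continuous_walsh j))
  have translate : ∫ x, F (m + 1) (x + e m) * walsh j (x + e m) ∂μG = fcoeff (F (m + 1)) j :=
    integral_add_right_eq_self (fun x => F (m + 1) x * walsh j x) (e m)
  have average (x : G) : F m x * walsh j x = (F (m + 1) x * walsh j x +
      F (m + 1) (x + e m) * walsh j (x + e m)) / 2 := by
    rw [hF.2 m x, ← add_e_eq_update, walsh_add_e, Nat.div_eq_of_lt hj, pow_zero]
    ring
  conv_rhs => rw [fcoeff]
  simp only [average]
  rw [integral_div, integral_add hint (hint.comp_add_right (e m)), translate, fcoeff,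
    add_self_div_two]

theorem IsDyadicMartingale.fcoeff_eq_of_le (hF : IsDyadicMartingale F) {j m n : ℕ}
    (hj : j < 2 ^ m) (hmn : m ≤ n) : fcoeff (F n) j = fcoeff (F m) j := by
  induction n, hmn using Nat.le_induction with
  | base => rfl
  | succ n hmn ih =>
    rw [hF.fcoeff_succ (hj.trans_le (Nat.pow_le_pow_right two_pos hmn)), ih]

theorem IsDyadicMartingale.mcoeff_eq_fcoeff (hF : IsDyadicMartingale F) {j m : ℕ}
    (hj : j < 2 ^ m) : mcoeff F j = fcoeff (F m) j := by
  rcases le_total m (j + 1) with h | h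
  · exact hF.fcoeff_eq_of_le hj h
  · exact (hF.fcoeff_eq_of_le (j.lt_succ_self.trans (j + 1).lt_two_pow_self) h).symm

theorem IsDyadicMartingale.S_two_pow (hF : IsDyadicMartingale F) (m : ℕ) (x : G) :
    S F (2 ^ m) x = F m x := by
  rw [← Sf_two_pow_of_dependsOn (hF.dependsOn m) x]
  exact Finset.sum_congr rfl fun j hj => by rw [hF.mcoeff_eq_fcoeff (Finset.mem_range.1 hj)]

end DyadicMartingale

/-! ### The `p`-modular -/

/-- The `p`-modular `∫ ‖f‖ ^ p ∂μ`, i.e. the `p`-th power of the `L_p` quasi-norm. For `p ≤ 1` it is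
subadditive without a constant, unlike the quasi-norm itself. -/
def lpModular {α E : Type*} [MeasurableSpace α] [ENorm E] (p : ℝ) (f : α → E) (μ : Measure α) :
    ℝ≥0∞ :=
  ∫⁻ x, ‖f x‖ₑ ^ p ∂μ

section LpModular

variable {α E : Type*} [MeasurableSpace α] {μ : Measure α} [NormedAddCommGroup E] {p : ℝ}

theorem enorm_add_rpow_le (hp : 0 ≤ p) (hp1 : p ≤ 1) (a b : E) :
    ‖a + b‖ₑ ^ p ≤ ‖a‖ₑ ^ p + ‖b‖ₑ ^ p :=
  (ENNReal.rpow_le_rpow (enorm_add_le a b) hp).trans (ENNReal.rpow_add_le_add_rpow _ _ hp hp1)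

theorem lpModular_add_le (hp : 0 ≤ p) (hp1 : p ≤ 1) {f : α → E} (hf : AEStronglyMeasurable f μ)
    (g : α → E) :
    lpModular p (fun x => f x + g x) μ ≤ lpModular p f μ + lpModular p g μ := by
  rw [lpModular, lpModular, lpModular, ← lintegral_add_left' (hf.enorm.pow_const p)]
  exact lintegral_mono fun x => enorm_add_rpow_le hp hp1 _ _

theorem lpModular_sum_le (hp : 0 < p) (hp1 : p ≤ 1) {ι : Type*} (s : Finset ι) {f : ι → α → E}
    (hf : ∀ i ∈ s, AEStronglyMeasurable (f i) μ) :
    lpModular p (fun x => ∑ i ∈ s, f i x) μ ≤ ∑ i ∈ s, lpModular p (f i) μ := by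
  classical
  induction s using Finset.induction_on with
  | empty => simp [lpModular, hp]
  | insert i s hi ih =>
    simp only [Finset.sum_insert hi]
    grw [lpModular_add_le hp.le hp1 (hf i (Finset.mem_insert_self i s)),
      ih fun j hj => hf j (Finset.mem_insert_of_mem hj)]

theorem lpModular_const_mul {𝕜 : Type*} [NormedDivisionRing 𝕜] (hp : 0 ≤ p) (c : 𝕜) {f : α → 𝕜}
    (hf : AEStronglyMeasurable f μ) :
    lpModular p (fun x => c * f x) μ = ‖c‖ₑ ^ p * lpModular p f μ := by
  simp only [lpModular, enorm_mul, ENNReal.mul_rpow_of_nonneg _ _ hp]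
  exact lintegral_const_mul'' _ (hf.enorm.pow_const p)

theorem lpModular_add_right [AddGroup α] [MeasurableAdd α] [μ.IsAddRightInvariant] (f : α → E)
    (y : α) : lpModular p (fun x => f (x + y)) μ = lpModular p f μ :=
  lintegral_add_right_eq_self (fun x => ‖f x‖ₑ ^ p) y

theorem enorm_half_rpow_mul_two : ‖(1 / 2 : ℝ)‖ₑ ^ p * 2 = (2 : ℝ≥0∞) ^ (1 - p) := by
  rw [one_div, enorm_inv two_ne_zero, Real.enorm_of_nonneg zero_le_two,
    ENNReal.ofReal_ofNat, ENNReal.inv_rpow, ← ENNReal.rpow_neg,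
    sub_eq_neg_add, ENNReal.rpow_add _ _ two_ne_zero ofNat_ne_top, ENNReal.rpow_one]

theorem lpModular_half_add_translate_le [AddGroup α] [MeasurableAdd α] [μ.IsAddRightInvariant]
    (hp : 0 ≤ p) (hp1 : p ≤ 1) {f : α → ℝ} (hf : AEStronglyMeasurable f μ) {ε : ℝ}
    (hε : |ε| = 1) (y : α) :
    lpModular p (fun x => 1 / 2 * (f x + ε * f (x + y))) μ ≤ 2 ^ (1 - p) * lpModular p f μ := by
  have hfy : AEStronglyMeasurable (fun x => f (x + y)) μ :=
    hf.comp_measurePreserving (measurePreserving_add_right μ y)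
  have hεp : ‖ε‖ₑ ^ p = 1 := by
    rw [← Real.enorm_abs, hε, enorm_one, ENNReal.one_rpow]
  calc lpModular p (fun x => 1 / 2 * (f x + ε * f (x + y))) μ
      = ‖(1 / 2 : ℝ)‖ₑ ^ p * lpModular p (fun x => f x + ε * f (x + y)) μ :=
        lpModular_const_mul hp _ (hf.add (hfy.const_mul ε))
    _ ≤ ‖(1 / 2 : ℝ)‖ₑ ^ p * (lpModular p f μ + lpModular p (fun x => ε * f (x + y)) μ) := by
        gcongr
        exact lpModular_add_le hp hp1 hf _
    _ = ‖(1 / 2 : ℝ)‖ₑ ^ p * 2 * lpModular p f μ := by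
        rw [lpModular_const_mul hp _ hfy, hεp, one_mul, lpModular_add_right, mul_assoc, two_mul]
    _ = 2 ^ (1 - p) * lpModular p f μ := by rw [enorm_half_rpow_mul_two]

theorem two_pow_rpow (k : ℕ) : ((2 : ℝ≥0∞) ^ k) ^ p = ((2 : ℝ≥0∞) ^ p) ^ k := by
  rw [← ENNReal.rpow_natCast, ← ENNReal.rpow_natCast, ← ENNReal.rpow_mul, ← ENNReal.rpow_mul,
    mul_comm]

theorem enorm_rpow_le_of_norm_le_two_pow (hp : 0 ≤ p) {a : E} {k : ℕ} (ha : ‖a‖ ≤ 2 ^ k) :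
    ‖a‖ₑ ^ p ≤ ((2 : ℝ≥0∞) ^ p) ^ k := by
  rw [← two_pow_rpow, ← ofReal_norm]
  gcongr
  refine (ENNReal.ofReal_le_ofReal ha).trans_eq ?_
  rw [ENNReal.ofReal_pow zero_le_two, ENNReal.ofReal_ofNat]

end LpModular

theorem sum_pow_le_inv_mul_pow {r : ℝ≥0∞} (hr : 1 < r) (hr' : r ≠ ⊤) (k : ℕ) :
    ∑ t ∈ Finset.range k, r ^ t ≤ (r - 1)⁻¹ * r ^ k := by
  lift r to ℝ≥0 using hr'
  have hr1 : 1 < r := by exact_mod_cast hr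
  have hpos : 0 < r - 1 := tsub_pos_of_lt hr1
  have hsum : ∑ t ∈ Finset.range k, r ^ t ≤ (r - 1)⁻¹ * r ^ k := by
    rw [inv_mul_eq_div, le_div_iff₀ hpos, geom_sum_mul_of_one_le hr1.le]
    exact tsub_le_self
  rw [← ENNReal.coe_one, ← ENNReal.coe_sub, ← ENNReal.coe_inv hpos.ne']
  exact_mod_cast hsum

/-! ### Dyadic blocks of Walsh series -/

/-- The dyadic interval `[2 ^ k * q, 2 ^ k * (q + 1))` of indices, i.e. those `j` with
`j / 2 ^ k = q`. -/
def dyadicIco (k q : ℕ) : Finset ℕ := Finset.Ico (2 ^ k * q) (2 ^ k * (q + 1))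

theorem mem_dyadicIco {k q j : ℕ} : j ∈ dyadicIco k q ↔ j / 2 ^ k = q := by
  rw [dyadicIco, Finset.mem_Ico, mul_comm, mul_comm (2 ^ k),
    ← Nat.le_div_iff_mul_le (by positivity), ← Nat.div_lt_iff_lt_mul (by positivity)]
  omega

theorem dyadicIco_zero_right (k : ℕ) : dyadicIco k 0 = Finset.range (2 ^ k) := by
  rw [dyadicIco, mul_zero, zero_add, mul_one, Finset.range_eq_Ico]

theorem sum_dyadicIco_succ {M : Type*} [AddCommMonoid M] (g : ℕ → M) (k q : ℕ) :
    ∑ j ∈ dyadicIco (k + 1) q, g j =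
      ∑ j ∈ dyadicIco k (2 * q), g j + ∑ j ∈ dyadicIco k (2 * q + 1), g j := by
  rw [dyadicIco, dyadicIco, dyadicIco, Finset.sum_Ico_consecutive g (by gcongr; omega)
    (by gcongr; omega), pow_succ, mul_assoc, mul_assoc]
  rfl

theorem sum_range_eq_sum_range_add_sum_dyadicIco {M : Type*} [AddCommMonoid M] (g : ℕ → M)
    (n m : ℕ) :
    ∑ j ∈ Finset.range n, g j = ∑ j ∈ Finset.range (2 ^ m * (n / 2 ^ m)), g j +
      ∑ k ∈ Finset.range m with n.testBit k, ∑ j ∈ dyadicIco k (2 * (n / 2 ^ (k + 1))), g j := by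
  induction m with
  | zero => simp
  | succ m ih =>
    have hdiv : n / 2 ^ (m + 1) = n / 2 ^ m / 2 := by rw [pow_succ, Nat.div_div_eq_div_mul]
    rw [ih, Finset.range_add_one, Finset.filter_insert, Nat.testBit_eq_decide_div_mod_eq,
      pow_succ, mul_assoc]
    obtain h | h := Nat.mod_two_eq_zero_or_one (n / 2 ^ m)
    · rw [if_neg (by simp [h]), ← pow_succ, show 2 * (n / 2 ^ (m + 1)) = n / 2 ^ m by omega]
    · rw [if_pos (by simp [h]), Finset.sum_insert (by simp), ← add_assoc, ← pow_succ, dyadicIco,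
        Finset.sum_range_add_sum_Ico g (by gcongr; omega),
        show 2 * (n / 2 ^ (m + 1)) + 1 = n / 2 ^ m by omega]

theorem sum_range_eq_sum_dyadicIco {M : Type*} [AddCommMonoid M] (g : ℕ → M) {n N : ℕ}
    (hn : n < 2 ^ N) :
    ∑ j ∈ Finset.range n, g j = ∑ k ∈ Finset.range N with n.testBit k,
      ∑ j ∈ dyadicIco k (2 * (n / 2 ^ (k + 1))), g j := by
  rw [sum_range_eq_sum_range_add_sum_dyadicIco g n N, Nat.div_eq_of_lt hn, mul_zero,
    Finset.range_zero, Finset.sum_empty, zero_add]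

/-- The part `∑ c_j w_j`, `j / 2 ^ k = q`, of the Walsh series with coefficients `c`. -/
def walshBlock (c : ℕ → ℝ) (k q : ℕ) (x : G) : ℝ := ∑ j ∈ dyadicIco k q, c j * walsh j x

/-- The Fejér sum of a dyadic block: the sum of the partial sums of `walshBlock c k q`, in which the
`i`-th of its `2 ^ k` terms, counted from `0`, has weight `2 ^ k - i`. -/
def fejerBlock (c : ℕ → ℝ) (k q : ℕ) : G → ℝ :=
  walshBlock (fun j => (2 ^ k - (j % 2 ^ k : ℕ) : ℝ) * c j) k q

theorem continuous_walshBlock (c : ℕ → ℝ) (k q : ℕ) : Continuous (walshBlock c k q) :=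
  continuous_finsetSum _ fun j _ => continuous_const.mul (continuous_walsh j)

theorem continuous_fejerBlock (c : ℕ → ℝ) (k q : ℕ) : Continuous (fejerBlock c k q) :=
  continuous_walshBlock _ k q

theorem walshBlock_add_e (c : ℕ → ℝ) (k q : ℕ) (x : G) :
    walshBlock c k q (x + e k) = (-1) ^ q * walshBlock c k q x := by
  rw [walshBlock, walshBlock, Finset.mul_sum]
  refine Finset.sum_congr rfl fun j hj => ?_
  rw [walsh_add_e, mem_dyadicIco.1 hj, mul_left_comm]

theorem walshBlock_succ (c : ℕ → ℝ) (k q : ℕ) (x : G) :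
    walshBlock c (k + 1) q x = walshBlock c k (2 * q) x + walshBlock c k (2 * q + 1) x :=
  sum_dyadicIco_succ _ k q

theorem walshBlock_eq_half_add_translate (c : ℕ → ℝ) (k q : ℕ) (x : G) :
    walshBlock c k q x = 1 / 2 * (walshBlock c (k + 1) (q / 2) x +
      (-1) ^ q * walshBlock c (k + 1) (q / 2) (x + e k)) := by
  simp only [walshBlock_succ, walshBlock_add_e]
  obtain ⟨u, rfl | rfl⟩ := Nat.even_or_odd' q
  · rw [Nat.mul_div_cancel_left u two_pos, pow_succ, pow_mul, neg_one_sq, one_pow]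
    ring
  · rw [show (2 * u + 1) / 2 = u by omega, pow_succ, pow_mul, neg_one_sq, one_pow]
    ring

theorem two_pow_sub_mod_eq_sum (k j : ℕ) :
    (2 ^ k - (j % 2 ^ k : ℕ) : ℝ) =
      1 + ∑ t ∈ Finset.range k, 2 ^ t * (1 / 2 * (1 + (-1) ^ (j / 2 ^ t))) := by
  induction k with
  | zero => simp [Nat.mod_one]
  | succ k ih =>
    rw [Finset.sum_range_succ, ← add_assoc, ← ih, Nat.mod_pow_succ, neg_one_pow_eq_pow_mod_two]
    push_cast
    obtain h | h := Nat.mod_two_eq_zero_or_one (j / 2 ^ k) <;>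
    · rw [h]
      push_cast
      ring

theorem fejerBlock_eq_walshBlock_add_sum (c : ℕ → ℝ) (k q : ℕ) (x : G) :
    fejerBlock c k q x = walshBlock c k q x + ∑ t ∈ Finset.range k,
      2 ^ t * (1 / 2 * (walshBlock c k q x + 1 * walshBlock c k q (x + e t))) := by
  simp only [fejerBlock, walshBlock, one_mul, ← Finset.sum_add_distrib, Finset.mul_sum]
  rw [Finset.sum_comm, ← Finset.sum_add_distrib]
  refine Finset.sum_congr rfl fun j _ => ?_
  rw [two_pow_sub_mod_eq_sum, add_mul, add_mul, one_mul, Finset.sum_mul, Finset.sum_mul]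
  congr 1
  refine Finset.sum_congr rfl fun t _ => ?_
  rw [walsh_add_e]
  ring

section BlockBounds

variable {p : ℝ}

theorem lpModular_walshBlock_le (hp : 0 ≤ p) (hp1 : p ≤ 1) (c : ℕ → ℝ) (k q s : ℕ) :
    lpModular p (walshBlock c k q) μG ≤
      ((2 : ℝ≥0∞) ^ (1 - p)) ^ s * lpModular p (walshBlock c (k + s) (q / 2 ^ s)) μG := by
  induction s generalizing k q with
  | zero => simp
  | succ s ih =>
    calc lpModular p (walshBlock c k q) μG
        ≤ 2 ^ (1 - p) * lpModular p (walshBlock c (k + 1) (q / 2)) μG := by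
          rw [funext (walshBlock_eq_half_add_translate c k q)]
          exact lpModular_half_add_translate_le hp hp1
            (continuous_walshBlock _ _ _).aestronglyMeasurable (abs_neg_one_pow q) (e k)
      _ ≤ 2 ^ (1 - p) * (((2 : ℝ≥0∞) ^ (1 - p)) ^ s *
            lpModular p (walshBlock c (k + 1 + s) (q / 2 / 2 ^ s)) μG) := by
          gcongr
          exact ih (k + 1) (q / 2)
      _ = ((2 : ℝ≥0∞) ^ (1 - p)) ^ (s + 1) *
            lpModular p (walshBlock c (k + (s + 1)) (q / 2 ^ (s + 1))) μG := by
          rw [pow_succ', mul_assoc, Nat.div_div_eq_div_mul, ← pow_succ', add_right_comm, add_assoc]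

/-- The constant in the bound of the `p`-modular of the Fejér sum of a dyadic block. -/
def fejerBlockConst (p : ℝ) : ℝ≥0∞ := 1 + 2 ^ (1 - p) * (2 ^ p - 1)⁻¹

theorem one_lt_two_rpow (hp : 0 < p) : 1 < (2 : ℝ≥0∞) ^ p := ENNReal.one_lt_rpow one_lt_two hp

theorem two_rpow_ne_top : (2 : ℝ≥0∞) ^ p ≠ ⊤ :=
  ENNReal.rpow_ne_top_of_ne_zero two_ne_zero ofNat_ne_top

theorem fejerBlockConst_ne_top (hp : 0 < p) : fejerBlockConst p ≠ ⊤ := by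
  have hinv : ((2 : ℝ≥0∞) ^ p - 1)⁻¹ ≠ ⊤ :=
    ENNReal.inv_ne_top.2 (tsub_pos_of_lt (one_lt_two_rpow hp)).ne'
  exact ENNReal.add_ne_top.2 ⟨one_ne_top, ENNReal.mul_ne_top two_rpow_ne_top hinv⟩

theorem lpModular_fejerBlock_le (hp : 0 < p) (hp1 : p ≤ 1) (c : ℕ → ℝ) (k q : ℕ) :
    lpModular p (fejerBlock c k q) μG ≤
      fejerBlockConst p * ((2 : ℝ≥0∞) ^ p) ^ k * lpModular p (walshBlock c k q) μG := by
  set f := walshBlock c k q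
  have hf : Continuous f := continuous_walshBlock c k q
  let A (t : ℕ) (x : G) : ℝ := 1 / 2 * (f x + 1 * f (x + e t))
  have hA (t : ℕ) : Continuous (A t) := by
    have := hf.comp (continuous_add_const (e t))
    fun_prop
  have summand (t : ℕ) : lpModular p (fun x => 2 ^ t * A t x) μG ≤
      ((2 : ℝ≥0∞) ^ p) ^ t * (2 ^ (1 - p) * lpModular p f μG) := by
    rw [lpModular_const_mul hp.le _ (hA t).aestronglyMeasurable]
    gcongr
    · exact enorm_rpow_le_of_norm_le_two_pow hp.le (by simp)
    · exact lpModular_half_add_translate_le hp.le hp1 hf.aestronglyMeasurable abs_one (e t)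
  calc lpModular p (fejerBlock c k q) μG
      ≤ lpModular p f μG + lpModular p (fun x => ∑ t ∈ Finset.range k, 2 ^ t * A t x) μG := by
        rw [funext (fejerBlock_eq_walshBlock_add_sum c k q)]
        exact lpModular_add_le hp.le hp1 hf.aestronglyMeasurable _
    _ ≤ lpModular p f μG +
          ∑ t ∈ Finset.range k, ((2 : ℝ≥0∞) ^ p) ^ t * (2 ^ (1 - p) * lpModular p f μG) := by
        gcongr
        exact (lpModular_sum_le hp hp1 _ fun t _ =>
          ((hA t).const_mul _).aestronglyMeasurable).trans (Finset.sum_le_sum fun t _ => summand t)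
    _ ≤ ((2 : ℝ≥0∞) ^ p) ^ k * lpModular p f μG + ((2 ^ p - 1)⁻¹ * ((2 : ℝ≥0∞) ^ p) ^ k) *
          (2 ^ (1 - p) * lpModular p f μG) := by
        rw [← Finset.sum_mul]
        gcongr
        · exact le_mul_of_one_le_left' (one_le_pow₀ (one_lt_two_rpow hp).le)
        · exact sum_pow_le_inv_mul_pow (one_lt_two_rpow hp) two_rpow_ne_top k
    _ = fejerBlockConst p * ((2 : ℝ≥0∞) ^ p) ^ k * lpModular p f μG := by
        rw [fejerBlockConst]
        ring

end BlockBounds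

/-! ### Fejér sums -/

theorem sum_Icc_sum_range {R : Type*} [Ring R] (g : ℕ → R) (n : ℕ) :
    ∑ k ∈ Finset.Icc 1 n, ∑ j ∈ Finset.range k, g j = ∑ j ∈ Finset.range n, (n - j : R) * g j := by
  induction n with
  | zero => simp
  | succ n ih =>
    rw [Finset.sum_Icc_succ_top (by omega), ih, Finset.sum_range_succ, Finset.sum_range_succ,
      ← add_assoc, ← Finset.sum_add_distrib]
    congr 1
    · refine Finset.sum_congr rfl fun j _ => ?_
      rw [Nat.cast_succ]
      noncomm_ring
    · rw [Nat.cast_succ, add_sub_cancel_left, one_mul]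

/-- The unnormalized Fejér mean `∑_{k=1}^n S_k` of the Walsh series with coefficients `c`. -/
def fejerSum (c : ℕ → ℝ) (n : ℕ) (x : G) : ℝ :=
  ∑ j ∈ Finset.range n, (n - j : ℝ) * c j * walsh j x

theorem continuous_fejerSum (c : ℕ → ℝ) (n : ℕ) : Continuous (fejerSum c n) :=
  continuous_finsetSum _ fun j _ => continuous_const.mul (continuous_walsh j)

theorem σ_eq_fejerSum (F : ℕ → G → ℝ) (n : ℕ) (x : G) :
    σ F n x = 1 / n * fejerSum (mcoeff F) n x := by
  simp only [σ, S, sum_Icc_sum_range, fejerSum, mul_assoc]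

theorem sub_eq_mod_add_of_mem_dyadicIco {n k j : ℕ} (hk : n.testBit k)
    (hj : j ∈ dyadicIco k (2 * (n / 2 ^ (k + 1)))) :
    (n - j : ℝ) = (n % 2 ^ k : ℕ) + (2 ^ k - (j % 2 ^ k : ℕ)) := by
  have hodd : n / 2 ^ k = 2 * (n / 2 ^ (k + 1)) + 1 := by
    rw [Nat.testBit_eq_decide_div_mod_eq, decide_eq_true_iff] at hk
    rw [pow_succ, ← Nat.div_div_eq_div_mul]
    omega
  have hn := Nat.div_add_mod n (2 ^ k)
  have hj' := Nat.div_add_mod j (2 ^ k)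
  rw [hodd] at hn
  rw [mem_dyadicIco.1 hj] at hj'
  have hn' := congrArg (Nat.cast (R := ℝ)) hn
  have hj'' := congrArg (Nat.cast (R := ℝ)) hj'
  push_cast at hn' hj'' ⊢
  linear_combination hj'' - hn'

theorem fejerSum_eq_sum_blocks (c : ℕ → ℝ) {n N : ℕ} (hn : n < 2 ^ N) (x : G) :
    fejerSum c n x = ∑ k ∈ Finset.range N with n.testBit k,
      ((n % 2 ^ k : ℕ) * walshBlock c k (2 * (n / 2 ^ (k + 1))) x +
        fejerBlock c k (2 * (n / 2 ^ (k + 1))) x) := by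
  rw [fejerSum, sum_range_eq_sum_dyadicIco _ hn]
  refine Finset.sum_congr rfl fun k hk => ?_
  rw [fejerBlock, walshBlock, walshBlock, Finset.mul_sum, ← Finset.sum_add_distrib]
  refine Finset.sum_congr rfl fun j hj => ?_
  rw [sub_eq_mod_add_of_mem_dyadicIco (Finset.mem_filter.1 hk).2 hj]
  ring

/-- The factor by which `σ_n` can increase the `p`-modular, up to a constant: a sum over the nonzero
binary digits of `n`, in which the digit `s` places below the highest one contributes
`2 ^ ((1 - 2 * p) * s)`. -/
def fejerWeight (p : ℝ) (n : ℕ) : ℝ≥0∞ :=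
  ∑ k ∈ Finset.range (hi n + 1) with n.testBit k, ((2 : ℝ≥0∞) ^ (1 - 2 * p)) ^ (hi n - k)

theorem lt_two_pow_hi_succ (n : ℕ) : n < 2 ^ (hi n + 1) := Nat.lt_pow_succ_log_self one_lt_two n

theorem two_pow_hi_le {n : ℕ} (hn : n ≠ 0) : 2 ^ hi n ≤ n := Nat.pow_log_le_self 2 hn

theorem testBit_hi {n : ℕ} (hn : n ≠ 0) : n.testBit (hi n) := by
  have hlt := lt_two_pow_hi_succ n
  have hle := two_pow_hi_le hn
  rw [Nat.testBit_eq_decide_div_mod_eq, decide_eq_true_iff,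
    Nat.div_eq_of_lt_le (k := 1) (by omega) (by omega)]

theorem one_le_fejerWeight (p : ℝ) {n : ℕ} (hn : n ≠ 0) : 1 ≤ fejerWeight p n := by
  have hmem : hi n ∈ (Finset.range (hi n + 1)).filter fun k => n.testBit k :=
    Finset.mem_filter.2 ⟨Finset.self_mem_range_succ _, testBit_hi hn⟩
  refine le_of_eq_of_le ?_ (Finset.single_le_sum (fun _ _ => zero_le) hmem)
  rw [Nat.sub_self, pow_zero]

section FejerSumBound

variable {p : ℝ}

theorem lpModular_natCast_mul_walshBlock_add_fejerBlock_le (hp : 0 < p) (hp1 : p ≤ 1) (c : ℕ → ℝ)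
    {m k : ℕ} (hm : m ≤ 2 ^ k) (q : ℕ) :
    lpModular p (fun x => m * walshBlock c k q x + fejerBlock c k q x) μG ≤
      (1 + fejerBlockConst p) * ((2 : ℝ≥0∞) ^ p) ^ k * lpModular p (walshBlock c k q) μG := by
  have hf : AEStronglyMeasurable (walshBlock c k q) μG :=
    (continuous_walshBlock c k q).aestronglyMeasurable
  have hm' : ‖(m : ℝ)‖ ≤ 2 ^ k := by
    rw [Real.norm_natCast]
    exact_mod_cast hm
  grw [lpModular_add_le hp.le hp1 (hf.const_mul _), lpModular_const_mul hp.le _ hf,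
    enorm_rpow_le_of_norm_le_two_pow hp.le hm', lpModular_fejerBlock_le hp hp1, add_mul, one_mul,
    add_mul]

theorem two_rpow_pow_mul_two_rpow_pow (p : ℝ) (k s : ℕ) :
    ((2 : ℝ≥0∞) ^ p) ^ k * ((2 : ℝ≥0∞) ^ (1 - p)) ^ (s + 1) =
      2 ^ (1 - p) * ((2 : ℝ≥0∞) ^ p) ^ (k + s) * ((2 : ℝ≥0∞) ^ (1 - 2 * p)) ^ s := by
  have hsplit : (2 : ℝ≥0∞) ^ (1 - p) = 2 ^ p * 2 ^ (1 - 2 * p) := by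
    rw [← ENNReal.rpow_add _ _ two_ne_zero ofNat_ne_top]
    ring_nf
  rw [pow_succ, pow_add]
  nth_rw 1 [hsplit]
  ring

theorem lpModular_fejerSum_le (hp : 0 < p) (hp1 : p ≤ 1) (c : ℕ → ℝ) (n : ℕ) :
    lpModular p (fejerSum c n) μG ≤ (1 + fejerBlockConst p) * 2 ^ (1 - p) *
      ((2 : ℝ≥0∞) ^ p) ^ hi n * fejerWeight p n *
        lpModular p (walshBlock c (hi n + 1) 0) μG := by
  rw [funext (fejerSum_eq_sum_blocks c (lt_two_pow_hi_succ n))]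
  refine (lpModular_sum_le hp hp1 _ fun k _ => ?_).trans ?_
  · exact ((continuous_const.mul (continuous_walshBlock _ _ _)).add
      (continuous_fejerBlock _ _ _)).aestronglyMeasurable
  rw [fejerWeight, Finset.mul_sum, Finset.sum_mul]
  refine Finset.sum_le_sum fun k hk => ?_
  obtain ⟨s, hs⟩ : ∃ s, hi n = k + s :=
    Nat.exists_eq_add_of_le (Finset.mem_range_succ_iff.1 (Finset.mem_filter.1 hk).1)
  have hq : 2 * (n / 2 ^ (k + 1)) / 2 ^ (s + 1) = 0 := by
    have hlt : n / 2 ^ (k + 1) < 2 ^ s := by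
      rw [Nat.div_lt_iff_lt_mul (by positivity), ← pow_add, ← add_assoc, add_comm s, ← hs]
      exact lt_two_pow_hi_succ n
    rw [Nat.div_eq_zero_iff_lt (by positivity), pow_succ' 2 s]
    exact (Nat.mul_lt_mul_left two_pos).2 hlt
  grw [lpModular_natCast_mul_walshBlock_add_fejerBlock_le hp hp1 c
      (Nat.mod_lt n (by positivity)).le,
    lpModular_walshBlock_le hp.le hp1 c k _ (s + 1), hq, ← add_assoc, ← hs, ← mul_assoc,
    mul_assoc (1 + _) (_ ^ k), two_rpow_pow_mul_two_rpow_pow, ← hs, hs, Nat.add_sub_cancel_left]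
  apply le_of_eq
  ring

end FejerSumBound

/-! ### The maximal function of the Fejér means -/

section MaximalFunction

variable {p : ℝ} {F : ℕ → G → ℝ}

theorem Sf_const_mul (a : ℝ) (f : G → ℝ) (m : ℕ) (x : G) :
    Sf (fun y => a * f y) m x = a * Sf f m x := by
  simp only [Sf, fcoeff, mul_assoc, integral_const_mul, Finset.mul_sum]

theorem Sf_sum_walsh (s : Finset ℕ) (c : ℕ → ℝ) (m : ℕ) (x : G) :
    Sf (fun y => ∑ i ∈ s, c i * walsh i y) m x =
      ∑ i ∈ Finset.range m with i ∈ s, c i * walsh i x := by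
  simp only [Sf, fcoeff_sum_walsh, ite_mul, zero_mul, Finset.sum_filter]

theorem funMart_σ_of_ge {n m : ℕ} (h : n ≤ 2 ^ m) (x : G) : funMart (σ F n) m x = σ F n x := by
  rw [funMart, funext (σ_eq_fejerSum F n), Sf_const_mul]
  unfold fejerSum
  rw [Sf_sum_walsh, Finset.filter_mem_eq_inter,
    Finset.inter_eq_right.2 (Finset.range_mono h)]

theorem IsDyadicMartingale.walshBlock_mcoeff_zero (hF : IsDyadicMartingale F) (m : ℕ) :
    walshBlock (mcoeff F) m 0 = F m := by
  ext x
  rw [walshBlock, dyadicIco_zero_right, ← hF.S_two_pow, S]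

theorem IsDyadicMartingale.funMart_σ_of_le (hF : IsDyadicMartingale F) {n m : ℕ}
    (h : 2 ^ m ≤ n) (x : G) :
    funMart (σ F n) m x = (1 - 2 ^ m / n) * F m x + 1 / n * fejerBlock (mcoeff F) m 0 x := by
  have hn : (n : ℝ) ≠ 0 := by
    exact_mod_cast (Nat.two_pow_pos m).trans_le h |>.ne'
  rw [funMart, funext (σ_eq_fejerSum F n), Sf_const_mul]
  unfold fejerSum
  rw [Sf_sum_walsh, Finset.filter_mem_eq_inter, Finset.inter_eq_left.2 (Finset.range_mono h),
    ← hF.walshBlock_mcoeff_zero m, fejerBlock, walshBlock, walshBlock, dyadicIco_zero_right,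
    Finset.mul_sum, Finset.mul_sum, Finset.mul_sum, ← Finset.sum_add_distrib]
  refine Finset.sum_congr rfl fun j hj => ?_
  rw [Nat.mod_eq_of_lt (Finset.mem_range.1 hj)]
  field_simp
  ring

theorem IsDyadicMartingale.enorm_funMart_σ_rpow_le (hF : IsDyadicMartingale F) (hp : 0 ≤ p)
    (hp1 : p ≤ 1) {n m : ℕ} (h : 2 ^ m ≤ n) (x : G) :
    ‖funMart (σ F n) m x‖ₑ ^ p ≤
      ‖F m x‖ₑ ^ p + ‖1 / n * fejerBlock (mcoeff F) m 0 x‖ₑ ^ p := by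
  have hle : (2 : ℝ) ^ m / n ≤ 1 := div_le_one_of_le₀ (by exact_mod_cast h) n.cast_nonneg
  have hweight : ‖(1 - 2 ^ m / n : ℝ)‖ₑ ≤ 1 := by
    rw [Real.enorm_of_nonneg (sub_nonneg.2 hle), ENNReal.ofReal_le_one, sub_le_self_iff]
    positivity
  rw [hF.funMart_σ_of_le h]
  grw [enorm_add_rpow_le hp hp1, enorm_mul, hweight, one_mul]

theorem IsDyadicMartingale.iSup_enorm_funMart_σ_rpow_le (hF : IsDyadicMartingale F) (hp : 0 < p)
    (hp1 : p ≤ 1) (n : ℕ) (x : G) :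
    (⨆ m, ‖funMart (σ F n) m x‖ₑ) ^ p ≤ ‖σ F n x‖ₑ ^ p + ((⨆ m, ‖F m x‖ₑ) ^ p +
      ∑ m ∈ Finset.range (hi n + 1), ‖1 / n * fejerBlock (mcoeff F) m 0 x‖ₑ ^ p) := by
  rw [← ENNReal.le_rpow_inv_iff hp, iSup_le_iff]
  intro m
  rw [ENNReal.le_rpow_inv_iff hp]
  obtain h | h := le_or_gt n (2 ^ m)
  · rw [funMart_σ_of_ge h]
    exact le_self_add
  · have hm : m ∈ Finset.range (hi n + 1) :=
      Finset.mem_range_succ_iff.2 (Nat.le_log_of_pow_le one_lt_two h.le)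
    grw [hF.enorm_funMart_σ_rpow_le hp.le hp1 h.le, le_iSup (fun m => ‖F m x‖ₑ) m,
      Finset.single_le_sum (f := fun m => ‖1 / n * fejerBlock (mcoeff F) m 0 x‖ₑ ^ p)
        (fun _ _ => zero_le) hm]
    exact le_add_self

theorem HpNorm_rpow (hp : p ≠ 0) (F : ℕ → G → ℝ) :
    HpNorm p F ^ p = ∫⁻ x, (⨆ n, ‖F n x‖ₑ) ^ p ∂μG := by
  rw [HpNorm, one_div, ENNReal.rpow_inv_rpow hp]
  rfl

theorem lpModular_le_HpNorm_rpow (hp : 0 < p) (F : ℕ → G → ℝ) (m : ℕ) :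
    lpModular p (F m) μG ≤ HpNorm p F ^ p := by
  rw [HpNorm_rpow hp.ne']
  exact lintegral_mono fun x => ENNReal.rpow_le_rpow (le_iSup (fun k => ‖F k x‖ₑ) m) hp.le

theorem IsDyadicMartingale.HpNorm_funMart_σ_rpow_le (hF : IsDyadicMartingale F) (hp : 0 < p)
    (hp1 : p ≤ 1) (n : ℕ) :
    HpNorm p (funMart (σ F n)) ^ p ≤ lpModular p (σ F n) μG + (HpNorm p F ^ p +
      ∑ m ∈ Finset.range (hi n + 1),
        lpModular p (fun x => 1 / n * fejerBlock (mcoeff F) m 0 x) μG) := by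
  have hσ : Continuous (σ F n) := by
    rw [funext (σ_eq_fejerSum F n)]
    exact continuous_const.mul (continuous_fejerSum _ n)
  have hblock (m : ℕ) : Continuous fun x => 1 / (n : ℝ) * fejerBlock (mcoeff F) m 0 x :=
    continuous_const.mul (continuous_fejerBlock _ m 0)
  have hmax : Measurable fun x => (⨆ m, ‖F m x‖ₑ) ^ p :=
    (Measurable.iSup fun m => (hF.continuous m).measurable.enorm).pow_const p
  rw [HpNorm_rpow hp.ne', HpNorm_rpow hp.ne']
  refine (lintegral_mono fun x => hF.iSup_enorm_funMart_σ_rpow_le hp hp1 n x).trans_eq ?_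
  rw [lintegral_add_left (hσ.measurable.enorm.pow_const p), lintegral_add_left hmax,
    lintegral_finsetSum _ fun m _ => (hblock m).measurable.enorm.pow_const p]
  rfl

theorem enorm_inv_natCast_rpow_mul_le_one (hp : 0 ≤ p) {n : ℕ} (hn : n ≠ 0) :
    ‖(1 / n : ℝ)‖ₑ ^ p * ((2 : ℝ≥0∞) ^ p) ^ hi n ≤ 1 := by
  have hle : (2 ^ hi n : ℝ≥0∞) ≤ n := by exact_mod_cast two_pow_hi_le hn
  rw [← two_pow_rpow, ← ENNReal.mul_rpow_of_nonneg _ _ hp]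
  refine ENNReal.rpow_le_one ?_ hp
  rw [one_div, enorm_inv (Nat.cast_ne_zero.2 hn), Real.enorm_natCast]
  grw [hle]
  exact ENNReal.inv_mul_le_one _

theorem IsDyadicMartingale.lpModular_σ_le (hF : IsDyadicMartingale F) (hp : 0 < p) (hp1 : p ≤ 1)
    {n : ℕ} (hn : n ≠ 0) :
    lpModular p (σ F n) μG ≤
      (1 + fejerBlockConst p) * 2 ^ (1 - p) * fejerWeight p n * HpNorm p F ^ p := by
  rw [funext (σ_eq_fejerSum F n),
    lpModular_const_mul hp.le _ (continuous_fejerSum _ n).aestronglyMeasurable]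
  calc _ ≤ ‖(1 / n : ℝ)‖ₑ ^ p * ((1 + fejerBlockConst p) * 2 ^ (1 - p) *
          ((2 : ℝ≥0∞) ^ p) ^ hi n * fejerWeight p n * HpNorm p F ^ p) := by
        grw [lpModular_fejerSum_le hp hp1, hF.walshBlock_mcoeff_zero,
          lpModular_le_HpNorm_rpow hp]
    _ = ‖(1 / n : ℝ)‖ₑ ^ p * ((2 : ℝ≥0∞) ^ p) ^ hi n *
          ((1 + fejerBlockConst p) * 2 ^ (1 - p) * fejerWeight p n * HpNorm p F ^ p) := by ring
    _ ≤ _ := mul_le_of_le_one_left' (enorm_inv_natCast_rpow_mul_le_one hp.le hn)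

theorem IsDyadicMartingale.sum_lpModular_fejerBlock_le (hF : IsDyadicMartingale F) (hp : 0 < p)
    (hp1 : p ≤ 1) {n : ℕ} (hn : n ≠ 0) :
    ∑ m ∈ Finset.range (hi n + 1), lpModular p (fun x => 1 / n * fejerBlock (mcoeff F) m 0 x) μG ≤
      fejerBlockConst p * ((2 ^ p - 1)⁻¹ * 2 ^ p) * HpNorm p F ^ p := by
  have term (m : ℕ) : lpModular p (fun x => 1 / n * fejerBlock (mcoeff F) m 0 x) μG ≤
      ‖(1 / n : ℝ)‖ₑ ^ p * fejerBlockConst p * HpNorm p F ^ p * ((2 : ℝ≥0∞) ^ p) ^ m := by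
    rw [lpModular_const_mul hp.le _ (continuous_fejerBlock _ m 0).aestronglyMeasurable]
    grw [lpModular_fejerBlock_le hp hp1, hF.walshBlock_mcoeff_zero, lpModular_le_HpNorm_rpow hp]
    apply le_of_eq
    ring
  calc _ ≤ ‖(1 / n : ℝ)‖ₑ ^ p * fejerBlockConst p * HpNorm p F ^ p *
          ((2 ^ p - 1)⁻¹ * ((2 : ℝ≥0∞) ^ p) ^ (hi n + 1)) := by
        grw [Finset.sum_le_sum fun m _ => term m, ← Finset.mul_sum,
          sum_pow_le_inv_mul_pow (one_lt_two_rpow hp) two_rpow_ne_top]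
    _ = ‖(1 / n : ℝ)‖ₑ ^ p * ((2 : ℝ≥0∞) ^ p) ^ hi n *
          (fejerBlockConst p * ((2 ^ p - 1)⁻¹ * 2 ^ p) * HpNorm p F ^ p) := by ring
    _ ≤ _ := mul_le_of_le_one_left' (enorm_inv_natCast_rpow_mul_le_one hp.le hn)

/-- The constant in the bound of the `p`-th power of the `H_p` quasi-norm of the Fejér means. -/
def fejerMeanConst (p : ℝ) : ℝ≥0∞ :=
  (1 + fejerBlockConst p) * 2 ^ (1 - p) + 1 + fejerBlockConst p * ((2 ^ p - 1)⁻¹ * 2 ^ p)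

theorem fejerMeanConst_ne_top (hp : 0 < p) : fejerMeanConst p ≠ ⊤ := by
  have hB := fejerBlockConst_ne_top hp
  have hinv : ((2 : ℝ≥0∞) ^ p - 1)⁻¹ ≠ ⊤ :=
    ENNReal.inv_ne_top.2 (tsub_pos_of_lt (one_lt_two_rpow hp)).ne'
  have h1 : (2 : ℝ≥0∞) ^ (1 - p) ≠ ⊤ := two_rpow_ne_top
  have h2 : (2 : ℝ≥0∞) ^ p ≠ ⊤ := two_rpow_ne_top
  unfold fejerMeanConst
  finiteness

theorem fejerMeanConst_ne_zero (p : ℝ) : fejerMeanConst p ≠ 0 := by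
  simp [fejerMeanConst]

theorem IsDyadicMartingale.HpNorm_funMart_σ_rpow_le_fejerWeight (hF : IsDyadicMartingale F)
    (hp : 0 < p) (hp1 : p ≤ 1) {n : ℕ} (hn : n ≠ 0) :
    HpNorm p (funMart (σ F n)) ^ p ≤ fejerMeanConst p * fejerWeight p n * HpNorm p F ^ p := by
  set H := HpNorm p F ^ p
  set W := fejerWeight p n
  have hW (a : ℝ≥0∞) : a ≤ a * W := le_mul_of_one_le_right' (one_le_fejerWeight p hn)
  calc HpNorm p (funMart (σ F n)) ^ p
      ≤ (1 + fejerBlockConst p) * 2 ^ (1 - p) * W * H +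
          (H + fejerBlockConst p * ((2 ^ p - 1)⁻¹ * 2 ^ p) * H) := by
        grw [hF.HpNorm_funMart_σ_rpow_le hp hp1, hF.lpModular_σ_le hp hp1 hn,
          hF.sum_lpModular_fejerBlock_le hp hp1 hn]
    _ ≤ (1 + fejerBlockConst p) * 2 ^ (1 - p) * W * H +
          (H + fejerBlockConst p * ((2 ^ p - 1)⁻¹ * 2 ^ p) * H) * W := by
        gcongr
        exact hW _
    _ = fejerMeanConst p * W * H := by
        rw [fejerMeanConst]
        ring

end MaximalFunction

theorem lo_le_of_testBit {n k : ℕ} (hk : n.testBit k) : lo n ≤ k := by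
  have hn : 2 ^ lo n * (n / 2 ^ lo n) = n := Nat.mul_div_cancel' pow_padicValNat_dvd
  rw [← hn, Nat.testBit_two_pow_mul, Bool.and_eq_true, decide_eq_true_iff] at hk
  exact hk.1

theorem lo_le_hi (n : ℕ) : lo n ≤ hi n := padicValNat_le_nat_log n

theorem fejerWeight_le (p : ℝ) (n : ℕ) :
    fejerWeight p n ≤ ∑ s ∈ Finset.range (dd n + 1), ((2 : ℝ≥0∞) ^ (1 - 2 * p)) ^ s := by
  have hreflect : ∑ s ∈ Finset.range (dd n + 1), ((2 : ℝ≥0∞) ^ (1 - 2 * p)) ^ s =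
      ∑ k ∈ Finset.Ico (lo n) (hi n + 1), ((2 : ℝ≥0∞) ^ (1 - 2 * p)) ^ (hi n - k) := by
    have hle := lo_le_hi n
    rw [Finset.sum_Ico_eq_sum_range, ← Finset.sum_flip, Nat.succ_sub hle]
    refine Finset.sum_congr rfl fun s _ => ?_
    rw [dd, Nat.sub_add_eq]
  rw [hreflect]
  refine Finset.sum_le_sum_of_subset fun k hk => ?_
  rw [Finset.mem_filter, Finset.mem_range] at hk
  exact Finset.mem_Ico.2 ⟨lo_le_of_testBit hk.2, hk.1⟩

theorem exists_fejerWeight_rpow_le {p : ℝ} (hp : 0 < p) (hp2 : p < 1 / 2) :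
    ∃ A : ℝ≥0, 0 < A ∧ ∀ n : ℕ,
      fejerWeight p n ^ (1 / p) ≤ A * (2 : ℝ≥0∞) ^ ((dd n : ℝ) * (1 / p - 2)) := by
  set r := (2 : ℝ≥0∞) ^ (1 - 2 * p)
  have hr : 1 < r := one_lt_two_rpow (by linarith)
  have hr' : r ≠ ⊤ := two_rpow_ne_top
  have hp' : 0 ≤ 1 / p := by positivity
  have hA : ((r - 1)⁻¹ * r) ^ (1 / p) ≠ ⊤ := ENNReal.rpow_ne_top_of_nonneg hp'
    (ENNReal.mul_ne_top (ENNReal.inv_ne_top.2 (tsub_pos_of_lt hr).ne') hr')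
  refine ⟨(((r - 1)⁻¹ * r) ^ (1 / p)).toNNReal, ENNReal.toNNReal_pos ?_ hA, fun n => ?_⟩
  · have hinv : (r - 1)⁻¹ ≠ 0 := ENNReal.inv_ne_zero.2 (ENNReal.sub_ne_top hr')
    rw [ne_eq, ENNReal.rpow_eq_zero_iff_of_pos (by positivity)]
    exact mul_ne_zero hinv (zero_lt_one.trans hr).ne'
  calc fejerWeight p n ^ (1 / p)
      ≤ ((r - 1)⁻¹ * r ^ (dd n + 1)) ^ (1 / p) := by
        gcongr
        exact (fejerWeight_le p n).trans (sum_pow_le_inv_mul_pow hr hr' _)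
    _ = ((r - 1)⁻¹ * r) ^ (1 / p) * (r ^ dd n) ^ (1 / p) := by
        rw [pow_succ', ← mul_assoc, ENNReal.mul_rpow_of_nonneg _ _ hp']
    _ = _ := by
        rw [ENNReal.coe_toNNReal hA, ← ENNReal.rpow_natCast, ← ENNReal.rpow_mul,
          ← ENNReal.rpow_mul, show (1 - 2 * p) * ((dd n : ℝ) * (1 / p)) = dd n * (1 / p - 2) by
            field_simp]

theorem fejer_Hp_bound_p_general (p : ℝ) (hp : 0 < p) (hp1 : p ≤ 1) :
    ∃ C : ℝ≥0, 0 < C ∧ ∀ F : ℕ → G → ℝ, IsDyadicMartingale F → ∀ n : ℕ, 1 ≤ n →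
      HpNorm p (funMart (σ F n)) ≤ C * fejerWeight p n ^ (1 / p) * HpNorm p F := by
  have hC : fejerMeanConst p ^ (1 / p) ≠ ⊤ :=
    ENNReal.rpow_ne_top_of_nonneg (by positivity) (fejerMeanConst_ne_top hp)
  refine ⟨(fejerMeanConst p ^ (1 / p)).toNNReal, ENNReal.toNNReal_pos ?_ hC, fun F hF n hn => ?_⟩
  · exact (ENNReal.rpow_pos (fejerMeanConst_ne_zero p).bot_lt (fejerMeanConst_ne_top hp)).ne'
  rw [ENNReal.coe_toNNReal hC, ← ENNReal.rpow_le_rpow_iff hp,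
    ENNReal.mul_rpow_of_nonneg _ _ hp.le, ENNReal.mul_rpow_of_nonneg _ _ hp.le, one_div,
    ENNReal.rpow_inv_rpow hp.ne', ENNReal.rpow_inv_rpow hp.ne']
  exact hF.HpNorm_funMart_σ_rpow_le_fejerWeight hp hp1 (Nat.one_le_iff_ne_zero.1 hn)

/-- `‖σ_n F‖_{H_p} ≤ c_p 2^{d(n)(1/p - 2)} ‖F‖_{H_p}` for `0 < p < 1/2`. -/
theorem fejer_Hp_bound_p (p : ℝ) (hp : 0 < p) (hp2 : p < 1/2) :
    ∃ C : ℝ≥0, 0 < C ∧ ∀ F : ℕ → G → ℝ, MemHp p F → ∀ n : ℕ, 1 ≤ n →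
      HpNorm p (funMart (σ F n)) ≤
        (C : ℝ≥0∞) * (2 : ℝ≥0∞) ^ ((dd n : ℝ) * (1/p - 2)) * HpNorm p F := by
  obtain ⟨C, hC0, hC⟩ := fejer_Hp_bound_p_general p hp (by linarith)
  obtain ⟨A, hA0, hA⟩ := exists_fejerWeight_rpow_le hp hp2
  refine ⟨C * A, mul_pos hC0 hA0, fun F hF n hn => ?_⟩
  grw [hC F hF.1 n hn, hA n, ENNReal.coe_mul, mul_assoc (C : ℝ≥0∞) A]
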